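/- Let (A,Λ) be any associative form ring, let (I,Γ) and (J,Δ) be two form ideals of (A,Λ), and let n ≥ 3. Then [FU(2n,I,Γ), FU(2n,J,Δ)] is central in EU(2n,A,Λ) modulo EU(2n,(I,Γ)∘(J,Δ)); that is, [[FU(2n,I,Γ), FU(2n,J,Δ)], EU(2n,A,Λ)] ≤ EU(2n,(I,Γ)∘(J,Δ)). -/

import Mathlib

open Matrix
open scoped commutatorElement

/-- Bak's form ring data on a ring `A`: an involution `bar`, a central symmetry
`λ` with `λ λ̄ = 1`, and a form parameter `Λ`. -/
structure FormRingData (A : Type*) [Ring A] where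
  bar : A →+ A
  bar_mul : ∀ a b : A, bar (a * b) = bar b * bar a
  bar_bar : ∀ a : A, bar (bar a) = a
  lam : A
  lam_comm : ∀ a : A, lam * a = a * lam
  lam_bar : lam * bar lam = 1
  Lambda : AddSubgroup A
  lambdaMin_mem : ∀ c : A, c - lam * bar c ∈ Lambda
  lambdaMax_mem : ∀ x ∈ Lambda, x = -(lam * bar x)
  lambda_conj : ∀ (c : A), ∀ x ∈ Lambda, c * x * bar c ∈ Lambda

namespace FormRingData

variable {A : Type*} [Ring A]

/-- Integral powers of the symmetry `λ`; negative powers use `λ̄ = λ⁻¹`. -/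
def lpow (D : FormRingData A) (k : ℤ) : A :=
  if 0 ≤ k then D.lam ^ k.toNat else (D.bar D.lam) ^ (-k).toNat

end FormRingData

/-- The index set `Ω = {1,…,n,−n,…,−1}`, coded as `Fin n × Bool`
(second component `true` = positive index). -/
abbrev Idx (n : ℕ) := Fin n × Bool

namespace Idx

/-- The involution `i ↦ −i` on indices. -/
def neg {n : ℕ} (i : Idx n) : Idx n := (i.1, !i.2)

/-- The sign `ε(i) ∈ {±1}`. -/
def eps {n : ℕ} (i : Idx n) : ℤ := if i.2 then 1 else -1

theorem neg_ne {n : ℕ} (i : Idx n) : neg i ≠ i := by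
  simp [neg, Prod.ext_iff]

theorem neg_injective {n : ℕ} : Function.Injective (neg (n := n)) := by
  intro i j h
  simp only [neg, Prod.mk.injEq] at h
  refine Prod.ext h.1 ?_
  have h2 := h.2
  cases hi : i.2 <;> cases hj : j.2 <;> simp_all

theorem neg_neg {n : ℕ} (i : Idx n) : neg (neg i) = i := by
  simp [neg]

end Idx

/-- `GL(2n, A)`, realised as the units of the `Ω × Ω` matrix ring over `A`. -/
abbrev GLn (A : Type*) [Ring A] (n : ℕ) := (Matrix (Idx n) (Idx n) A)ˣ

section aux

theorem one_add_mul_one_sub {R : Type*} [Ring R] {X : R} (h : X * X = 0) :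
    (1 + X) * (1 - X) = 1 := by
  have hh : (1 + X) * (1 - X) = 1 - X * X := by noncomm_ring
  rw [hh, h, sub_zero]

theorem one_sub_mul_one_add {R : Type*} [Ring R] {X : R} (h : X * X = 0) :
    (1 - X) * (1 + X) = 1 := by
  have hh : (1 - X) * (1 + X) = 1 - X * X := by noncomm_ring
  rw [hh, h, sub_zero]

theorem stdBasisMatrix_neg' {A : Type*} [Ring A] {n : ℕ} (i j : Idx n) (c : A) :
    Matrix.single i j (-c) = -Matrix.single i j c := by
  refine eq_neg_of_add_eq_zero_left ?_
  rw [← Matrix.single_add]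
  simp

end aux

namespace FormRingData

variable {A : Type*} [Ring A] {n : ℕ}

/-- The off-diagonal part of a short root element. -/
def Xmat (D : FormRingData A) (i j : Idx n) (c : A) : Matrix (Idx n) (Idx n) A :=
  Matrix.single i j c -
    Matrix.single (Idx.neg j) (Idx.neg i) (D.lpow ((Idx.eps j - Idx.eps i) / 2) * D.bar c)

theorem Xmat_mul (D : FormRingData A) {i j : Idx n} (hij : i ≠ j) (c c' : A) :
    D.Xmat i j c * D.Xmat i j c' = 0 := by
  unfold Xmat
  rw [sub_mul, mul_sub, mul_sub,
    Matrix.single_mul_single_of_ne _ _ _ _ (Ne.symm hij),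
    Matrix.single_mul_single_of_ne _ _ _ _ (Ne.symm (Idx.neg_ne j)),
    Matrix.single_mul_single_of_ne _ _ _ _ (Idx.neg_ne i),
    Matrix.single_mul_single_of_ne _ _ _ _ (fun h => hij (Idx.neg_injective h))]
  simp

theorem Xmat_neg (D : FormRingData A) (i j : Idx n) (c : A) :
    D.Xmat i j (-c) = -D.Xmat i j c := by
  unfold Xmat
  rw [map_neg, mul_neg, stdBasisMatrix_neg', stdBasisMatrix_neg']
  abel

/-- The elementary short root unipotent `T_{ij}(c)`, for `i ≠ ±j`
(with junk value `1` when `i = j`). -/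
def TS (D : FormRingData A) (i j : Idx n) (c : A) : GLn A n :=
  if h : i = j then 1 else
    { val := 1 + D.Xmat i j c
      inv := 1 + D.Xmat i j (-c)
      val_inv := by
        rw [D.Xmat_neg, ← sub_eq_add_neg]
        exact one_add_mul_one_sub (D.Xmat_mul h c c)
      inv_val := by
        rw [D.Xmat_neg, ← sub_eq_add_neg]
        exact one_sub_mul_one_add (D.Xmat_mul h c c) }

/-- The elementary long root unipotent `T_{i,−i}(c)`. -/
def TL (D : FormRingData A) (i : Idx n) (c : A) : GLn A n where
  val := 1 + Matrix.single i (Idx.neg i) c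
  inv := 1 + Matrix.single i (Idx.neg i) (-c)
  val_inv := by
    rw [stdBasisMatrix_neg', ← sub_eq_add_neg]
    exact one_add_mul_one_sub (Matrix.single_mul_single_of_ne _ _ _ _ (Idx.neg_ne i) _)
  inv_val := by
    rw [stdBasisMatrix_neg', ← sub_eq_add_neg]
    exact one_sub_mul_one_add (Matrix.single_mul_single_of_ne _ _ _ _ (Idx.neg_ne i) _)

/-- The elementary unitary transvection `T_{ij}(c)` (long or short root type
according to whether `j = −i`). -/
def T (D : FormRingData A) (i j : Idx n) (c : A) : GLn A n :=
  if j = Idx.neg i then D.TL i c else D.TS i j c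

/-- The elementary commutator `Y_{ij}(a,b) = [T_{ij}(a), T_{ji}(b)]`. -/
def Y (D : FormRingData A) (i j : Idx n) (a b : A) : GLn A n :=
  ⁅D.T i j a, D.T j i b⁆

/-- The elementary conjugate `Z_{ij}(a,c) = T_{ji}(c) T_{ij}(a) T_{ji}(−c)`. -/
def Z (D : FormRingData A) (i j : Idx n) (a c : A) : GLn A n :=
  D.T j i c * D.T i j a * D.T j i (-c)

/-- The set of elementary unitary transvections of level `(I,Γ)`. -/
def transvGen (D : FormRingData A) (n : ℕ) (I Γ : AddSubgroup A) : Set (GLn A n) :=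
  {x | ∃ i j : Idx n, i ≠ j ∧ i ≠ Idx.neg j ∧ ∃ c ∈ I, x = D.TS i j c} ∪
    {x | ∃ i : Idx n, ∃ g ∈ Γ, x = D.TL i (D.lpow (-(Idx.eps i + 1) / 2) * g)}

/-- The unrelative elementary subgroup `FU(2n, I, Γ)`. -/
def FU (D : FormRingData A) (n : ℕ) (I Γ : AddSubgroup A) : Subgroup (GLn A n) :=
  Subgroup.closure (D.transvGen n I Γ)

/-- The absolute elementary unitary group `EU(2n, A, Λ)`. -/
def EUmax (D : FormRingData A) (n : ℕ) : Subgroup (GLn A n) :=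
  D.FU n ⊤ D.Lambda

/-- The relative elementary subgroup `EU(2n, I, Γ)`: the normal closure of
`FU(2n, I, Γ)` in `EU(2n, A, Λ)`. -/
def EU (D : FormRingData A) (n : ℕ) (I Γ : AddSubgroup A) : Subgroup (GLn A n) :=
  Subgroup.closure {x | ∃ g ∈ D.EUmax n, ∃ t ∈ D.transvGen n I Γ, x = g * t * g⁻¹}

/-- The additive subgroup generated by products `st`, `s ∈ S`, `t ∈ T`. -/
def mulSub (S T : AddSubgroup A) : AddSubgroup A :=
  AddSubgroup.closure {x | ∃ a ∈ S, ∃ b ∈ T, x = a * b}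

/-- The symmetrised product `ST + TS` of two (additive subgroups underlying)
two-sided ideals. -/
def symI (S T : AddSubgroup A) : AddSubgroup A :=
  mulSub S T ⊔ mulSub T S

/-- The minimal relative form parameter `Γ_min(K)` of level `K`. -/
def gammaMin (D : FormRingData A) (K : AddSubgroup A) : AddSubgroup A :=
  AddSubgroup.closure
    ({x | ∃ a ∈ K, x = a - D.lam * D.bar a} ∪
      {x | ∃ a ∈ K, ∃ c ∈ D.Lambda, x = a * c * D.bar a})

/-- The relative form parameter `ˢΓ = ⟨ b γ b̄ ∣ b ∈ S, γ ∈ Γ ⟩`. -/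
def conjPar (D : FormRingData A) (S Γ : AddSubgroup A) : AddSubgroup A :=
  AddSubgroup.closure {x | ∃ b ∈ S, ∃ g ∈ Γ, x = b * g * D.bar b}

/-- The relative form parameter of the symmetrised product
`(I,Γ)∘(J,Δ) = (IJ+JI, Γ_min(IJ+JI) + ᴶΓ + ᴵΔ)`. -/
def symG (D : FormRingData A) (I Γ J Δ : AddSubgroup A) : AddSubgroup A :=
  D.gammaMin (symI I J) ⊔ D.conjPar J Γ ⊔ D.conjPar I Δ

/-- The elementary subgroup `EU(2n, (I,Γ)∘(J,Δ))` of the symmetrised product. -/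
def EUsym (D : FormRingData A) (n : ℕ) (I Γ J Δ : AddSubgroup A) : Subgroup (GLn A n) :=
  D.EU n (symI I J) (D.symG I Γ J Δ)

/-- Position-dependent membership `a ∈ (I,Γ)` at position `(i,j)`:
`a ∈ I` for a short root position, `a ∈ λ^{−(ε(i)+1)/2}Γ` for a long one. -/
def pmem (D : FormRingData A) (I Γ : AddSubgroup A) {n : ℕ} (i j : Idx n) (a : A) : Prop :=
  if j = Idx.neg i then ∃ g ∈ Γ, a = D.lpow (-(Idx.eps i + 1) / 2) * g else a ∈ I

end FormRingData

/-- A form ideal `(I,Γ)` of the form ring `(A,Λ)`. -/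
structure FormIdeal {A : Type*} [Ring A] (D : FormRingData A) where
  I : AddSubgroup A
  Gamma : AddSubgroup A
  mul_mem_left : ∀ (c : A), ∀ x ∈ I, c * x ∈ I
  mul_mem_right : ∀ (c : A), ∀ x ∈ I, x * c ∈ I
  bar_mem : ∀ x ∈ I, D.bar x ∈ I
  gammaMin_le : D.gammaMin I ≤ Gamma
  gamma_le_I : Gamma ≤ I
  gamma_le_Lambda : Gamma ≤ D.Lambda
  gamma_conj : ∀ (c : A), ∀ x ∈ Gamma, c * x * D.bar c ∈ Gamma

/-!
The elementary subgroups are generated by root subgroups for a root system of type `C_n`. By the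
Chevalley formulas, the commutator of the root subgroups of levels `(I,Γ)` and `(J,Δ)` at two roots
`α ≠ -β` lies in the product of the root subgroups of level `(I,Γ)∘(J,Δ)` at the positive
combinations of `α` and `β`, so only opposite roots `±α` matter.

As `n ≥ 3`, some coordinate `p` of `α` vanishes. The roots with nonzero `p`-coordinate already
generate `EU(2n,A,Λ)`: transvections at the other roots come from commutators of transvections at
these, with coefficient `1` in one argument. If `β` is a root with nonzero `p`-coordinate, all
positive combinations of `±α` and `β` also have nonzero `p`-coordinate, hence are never opposite to
`∓α`. Both double commutators `[[X_{-α}, X_β], X_α]` and `[[X_β, X_α], X_{-α}]` therefore lie in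
`EU(2n,(I,Γ)∘(J,Δ))`, and the three subgroups lemma modulo this subgroup gives the claim.
-/

section CentralizerMod

variable {G : Type*} [Group G] {N K : Subgroup G}

/-- The elements normalising `N` that centralise `K` modulo `N`. The normality condition makes
them a subgroup. -/
def centralizerMod (N K : Subgroup G) : Subgroup G where
  carrier := {x | x ∈ Subgroup.normalizer (N : Set G) ∧ ∀ z ∈ K, ⁅x, z⁆ ∈ N}
  one_mem' := ⟨one_mem _, fun z _ => by simp only [commutatorElement_one_left, one_mem]⟩
  mul_mem' := by
    rintro x y ⟨hx, hxK⟩ ⟨hy, hyK⟩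
    refine ⟨mul_mem hx hy, fun z hz => ?_⟩
    rw [commutatorElement_mul_left_eq_conj_mul]
    exact mul_mem ((Subgroup.mem_normalizer_iff.1 hx _).1 (hyK z hz)) (hxK z hz)
  inv_mem' := by
    rintro x ⟨hx, hxK⟩
    refine ⟨inv_mem hx, fun z hz => ?_⟩
    have h := (Subgroup.mem_normalizer_iff.1 (inv_mem hx) _).1 (inv_mem (hxK z hz))
    rwa [commutatorElement_inv, inv_inv, ← commutatorElement_inv_left] at h

theorem le_centralizerMod_iff {H : Subgroup G} :
    H ≤ centralizerMod N K ↔ H ≤ Subgroup.normalizer (N : Set G) ∧ ⁅H, K⁆ ≤ N := by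
  rw [Subgroup.commutator_le]
  exact ⟨fun h => ⟨fun x hx => (h hx).1, fun x hx => (h hx).2⟩, fun h x hx => ⟨h.1 hx, h.2 x hx⟩⟩

theorem le_normalizer_centralizerMod (hK : K ≤ Subgroup.normalizer (N : Set G)) :
    K ≤ Subgroup.normalizer (centralizerMod N K : Set G) := by
  rw [Subgroup.le_normalizer_iff]
  rintro g hg x ⟨hx, hxK⟩
  refine ⟨mul_mem (mul_mem (hK hg) hx) (inv_mem (hK hg)), fun z hz => ?_⟩
  rw [show z = g * (g⁻¹ * z * g) * g⁻¹ by group, ← conjugate_commutatorElement]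
  exact (Subgroup.mem_normalizer_iff.1 (hK hg) _).1
    (hxK _ (mul_mem (mul_mem (inv_mem hg) hz) hg))

theorem commutator_commutator_le_of_rotate {H₁ H₂ H₃ : Subgroup G}
    (h₁ : H₁ ≤ Subgroup.normalizer (N : Set G)) (h₂ : H₂ ≤ Subgroup.normalizer (N : Set G))
    (h₃ : H₃ ≤ Subgroup.normalizer (N : Set G)) (h₂₃₁ : ⁅⁅H₂, H₃⁆, H₁⁆ ≤ N)
    (h₃₁₂ : ⁅⁅H₃, H₁⁆, H₂⁆ ≤ N) : ⁅⁅H₁, H₂⁆, H₃⁆ ≤ N := by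
  set M := Subgroup.normalizer (N : Set G)
  let π := QuotientGroup.mk' (N.subgroupOf M)
  have map_eq_bot_iff (K : Subgroup M) : K.map π = ⊥ ↔ K.map M.subtype ≤ N := by
    rw [Subgroup.map_eq_bot_iff, QuotientGroup.ker_mk', Subgroup.map_le_iff_le_comap]
    rfl
  rw [← Subgroup.map_subgroupOf_eq_of_le h₁, ← Subgroup.map_subgroupOf_eq_of_le h₂,
    ← Subgroup.map_subgroupOf_eq_of_le h₃] at h₂₃₁ h₃₁₂ ⊢
  simp only [← Subgroup.map_commutator, ← map_eq_bot_iff] at h₂₃₁ h₃₁₂ ⊢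
  simp only [Subgroup.map_commutator] at h₂₃₁ h₃₁₂ ⊢
  exact Subgroup.commutator_commutator_eq_bot_of_rotate h₂₃₁ h₃₁₂

end CentralizerMod

section UnipotentUnits

variable {R : Type*} [Ring R] {X Y : R} {x y : Rˣ}

theorem val_inv_of_val_eq_one_add (hx : (x : R) = 1 + X) (hX : X * X = 0) :
    (↑x⁻¹ : R) = 1 - X :=
  Units.inv_eq_of_mul_eq_one_right (by rw [hx, one_add_mul_one_sub hX])

theorem val_commutator_of_val_eq_one_add (hx : (x : R) = 1 + X) (hy : (y : R) = 1 + Y)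
    (hX : X * X = 0) (hY : Y * Y = 0) (hXYX : X * Y * X = 0) :
    (↑⁅x, y⁆ : R) = 1 + (X * Y - Y * X + Y * X * Y) := by
  have expand : (1 + X) * (1 + Y) * (1 - X) * (1 - Y) = 1 + (X * Y - Y * X + Y * X * Y) -
      X * X * (1 - Y) - (1 + X) * (Y * Y) - X * Y * X * (1 - Y) := by noncomm_ring
  rw [commutatorElement_def, Units.val_mul, Units.val_mul, Units.val_mul,
    val_inv_of_val_eq_one_add hx hX, val_inv_of_val_eq_one_add hy hY, hx, hy, expand, hX, hY, hXYX]
  simp only [zero_mul, mul_zero, sub_zero]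

end UnipotentUnits

namespace Idx

variable {n : ℕ} {i j : Idx n}

theorem eps_neg (i : Idx n) : Idx.eps (Idx.neg i) = -Idx.eps i := by
  obtain ⟨i, _ | _⟩ := i <;> rfl

theorem eps_eq_one_or (i : Idx n) : Idx.eps i = 1 ∨ Idx.eps i = -1 := by
  obtain ⟨i, _ | _⟩ := i
  · exact Or.inr rfl
  · exact Or.inl rfl

theorem ne_neg_comm : i ≠ neg j ↔ neg i ≠ j :=
  (neg_injective.ne_iff' (neg_neg j)).symm

end Idx

namespace FormRingData

section Scalars

variable {A : Type*} [Ring A] (D : FormRingData A)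

theorem bar_one : D.bar 1 = 1 := by
  have h := D.bar_mul 1 (D.bar 1)
  rw [D.bar_bar, one_mul, D.bar_bar] at h
  exact h.symm

theorem bar_pow (a : A) (k : ℕ) : D.bar (a ^ k) = D.bar a ^ k := by
  induction k with
  | zero => rw [pow_zero, pow_zero, D.bar_one]
  | succ k ih => rw [pow_succ, D.bar_mul, ih, pow_succ']

/-- The symmetry `λ` as a unit, so that `lpow` becomes a power in a group. -/
def lamUnit : Aˣ where
  val := D.lam
  inv := D.bar D.lam
  val_inv := D.lam_bar
  inv_val := by rw [← D.lam_comm, D.lam_bar]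

theorem lpow_natCast (k : ℕ) : D.lpow k = D.lam ^ k := by
  simp [lpow]

theorem lpow_neg_natCast (k : ℕ) : D.lpow (-k) = D.bar D.lam ^ k := by
  obtain rfl | hk := k.eq_zero_or_pos
  · simp [lpow]
  · simp [lpow, hk.ne']

theorem lpow_eq_zpow (k : ℤ) : D.lpow k = ↑(D.lamUnit ^ k) := by
  obtain ⟨m, rfl | rfl⟩ := k.eq_nat_or_neg
  · rw [lpow_natCast, zpow_natCast, Units.val_pow_eq_pow_val]
    rfl
  · rw [lpow_neg_natCast, _root_.zpow_neg, zpow_natCast, ← inv_pow, Units.val_pow_eq_pow_val]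
    rfl

theorem lpow_zero : D.lpow 0 = 1 := by
  rw [lpow_eq_zpow, zpow_zero, Units.val_one]

theorem lpow_one : D.lpow 1 = D.lam := by
  rw [lpow_eq_zpow, zpow_one]
  rfl

theorem lpow_add (k l : ℤ) : D.lpow (k + l) = D.lpow k * D.lpow l := by
  simp only [lpow_eq_zpow, _root_.zpow_add, Units.val_mul]

theorem lpow_comm (k : ℤ) (a : A) : D.lpow k * a = a * D.lpow k := by
  have h : Commute a D.lamUnit := (D.lam_comm a).symm
  rw [lpow_eq_zpow]
  exact (h.units_zpow_right k).eq.symm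

theorem bar_lpow (k : ℤ) : D.bar (D.lpow k) = D.lpow (-k) := by
  obtain ⟨m, rfl | rfl⟩ := k.eq_nat_or_neg
  · rw [lpow_natCast, lpow_neg_natCast, bar_pow]
  · rw [_root_.neg_neg, lpow_natCast, lpow_neg_natCast, bar_pow, D.bar_bar]

theorem lpow_mul_mul_lpow_mul (k l : ℤ) (a b : A) :
    D.lpow k * a * (D.lpow l * b) = D.lpow (k + l) * (a * b) := by
  rw [mul_assoc, ← mul_assoc a, ← lpow_comm, lpow_add, mul_assoc, mul_assoc]

theorem bar_lpow_mul (k : ℤ) (a : A) : D.bar (D.lpow k * a) = D.lpow (-k) * D.bar a := by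
  rw [D.bar_mul, bar_lpow, lpow_comm]

variable {n : ℕ}

/-- The coefficient `λ^{(ε(j)-ε(i))/2}` relating the two entries of the short root element
`T_{ij}`. -/
def shortCoeff (i j : Idx n) : A := D.lpow ((Idx.eps j - Idx.eps i) / 2)

/-- The coefficient `λ^{-(ε(i)+1)/2}` by which the form parameter is rescaled at the long root
position `(i,-i)`. -/
def longCoeff (i : Idx n) : A := D.lpow (-(Idx.eps i + 1) / 2)

theorem shortCoeff_neg_neg (i j : Idx n) :
    D.shortCoeff (Idx.neg j) (Idx.neg i) = D.shortCoeff i j := by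
  rw [shortCoeff, shortCoeff, Idx.eps_neg, Idx.eps_neg, neg_sub_neg]

theorem shortCoeff_mul_mul_shortCoeff_mul (i j l : Idx n) (a b : A) :
    D.shortCoeff j l * a * (D.shortCoeff i j * b) = D.shortCoeff i l * (a * b) := by
  rw [shortCoeff, shortCoeff, lpow_mul_mul_lpow_mul, shortCoeff]
  congr 2
  have := i.eps_eq_one_or; have := j.eps_eq_one_or; have := l.eps_eq_one_or
  omega

theorem shortCoeff_mul_bar_shortCoeff_mul_bar (i j : Idx n) (a : A) :
    D.shortCoeff i j * D.bar (D.shortCoeff i j * D.bar a) = a := by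
  rw [shortCoeff, bar_lpow_mul, D.bar_bar, ← mul_assoc, ← lpow_add, add_neg_cancel, lpow_zero,
    one_mul]

theorem shortCoeff_mul_mul_longCoeff_mul (i l : Idx n) (a b : A) :
    D.shortCoeff (Idx.neg i) l * a * (D.longCoeff i * b) = D.longCoeff (Idx.neg l) * (a * b) := by
  rw [shortCoeff, longCoeff, lpow_mul_mul_lpow_mul, longCoeff, Idx.eps_neg, Idx.eps_neg]
  congr 2
  have := i.eps_eq_one_or; have := l.eps_eq_one_or
  omega

theorem shortCoeff_mul_bar_longCoeff_mul (i : Idx n) (a : A) :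
    D.shortCoeff i (Idx.neg i) * D.bar (D.longCoeff i * a) =
      D.longCoeff i * (D.lam * D.bar a) := by
  rw [shortCoeff, longCoeff, bar_lpow_mul, ← mul_assoc, ← lpow_add, ← mul_assoc, ← lpow_one,
    ← lpow_add, Idx.eps_neg]
  congr 2
  have := i.eps_eq_one_or
  omega

theorem longCoeff_mul_lpow_mul (i : Idx n) (a : A) :
    D.longCoeff i * (D.lpow ((Idx.eps i + 1) / 2) * a) = a := by
  have h : -(Idx.eps i + 1) / 2 + (Idx.eps i + 1) / 2 = 0 := by
    have := i.eps_eq_one_or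
    omega
  rw [longCoeff, ← mul_assoc, ← lpow_add, h, lpow_zero, one_mul]

end Scalars

end FormRingData

namespace FormRingData

section RootElements

variable {A : Type*} [Ring A] (D : FormRingData A) {n : ℕ} {i j k l : Idx n}

theorem Xmat_eq (i j : Idx n) (a : A) :
    D.Xmat i j a = single i j a - single (Idx.neg j) (Idx.neg i) (D.shortCoeff i j * D.bar a) :=
  rfl

theorem Xmat_add (i j : Idx n) (a b : A) : D.Xmat i j (a + b) = D.Xmat i j a + D.Xmat i j b := by
  simp only [Xmat_eq, map_add, mul_add, single_add]
  abel

theorem Xmat_swap (i j : Idx n) (a : A) :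
    D.Xmat (Idx.neg j) (Idx.neg i) (-(D.shortCoeff i j * D.bar a)) = D.Xmat i j a := by
  rw [Xmat_neg, Xmat_eq, Xmat_eq, Idx.neg_neg, Idx.neg_neg, shortCoeff_neg_neg,
    shortCoeff_mul_bar_shortCoeff_mul_bar, neg_sub]

theorem single_mul_Xmat_same (hij : i ≠ Idx.neg j) (k : Idx n) (c a : A) :
    single k i c * D.Xmat i j a = single k j (c * a) := by
  rw [Xmat_eq, mul_sub, single_mul_single_same, single_mul_single_of_ne _ _ _ _ hij, sub_zero]

theorem Xmat_mul_single_same (hij : i ≠ Idx.neg j) (k : Idx n) (a c : A) :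
    D.Xmat i j a * single j k c = single i k (a * c) := by
  rw [Xmat_eq, sub_mul, single_mul_single_same,
    single_mul_single_of_ne _ _ _ _ (Idx.ne_neg_comm.1 hij), sub_zero]

theorem single_mul_Xmat_of_ne (hli : l ≠ i) (hlj : l ≠ Idx.neg j) (k : Idx n) (c a : A) :
    single k l c * D.Xmat i j a = 0 := by
  rw [Xmat_eq, mul_sub, single_mul_single_of_ne _ _ _ _ hli, single_mul_single_of_ne _ _ _ _ hlj,
    sub_zero]

theorem Xmat_mul_single_of_ne (hjk : j ≠ k) (hik : i ≠ Idx.neg k) (l : Idx n) (a c : A) :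
    D.Xmat i j a * single k l c = 0 := by
  rw [Xmat_eq, sub_mul, single_mul_single_of_ne _ _ _ _ hjk,
    single_mul_single_of_ne _ _ _ _ (Idx.ne_neg_comm.1 hik), sub_zero]

theorem Xmat_mul_Xmat (hij : i ≠ Idx.neg j) (hjl : j ≠ Idx.neg l) (hil : i ≠ l) (a b : A) :
    D.Xmat i j a * D.Xmat j l b = single i l (a * b) := by
  rw [D.Xmat_eq j l, mul_sub, D.Xmat_mul_single_same hij,
    D.Xmat_mul_single_of_ne hjl (by rwa [Idx.neg_neg]), sub_zero]

theorem Xmat_mul_Xmat_swap (hij : i ≠ Idx.neg j) (hjl : j ≠ Idx.neg l) (hil : i ≠ l) (a b : A) :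
    D.Xmat j l b * D.Xmat i j a =
      single (Idx.neg l) (Idx.neg i) (D.shortCoeff i l * D.bar (a * b)) := by
  rw [← D.Xmat_swap j l, ← D.Xmat_swap i j,
    D.Xmat_mul_Xmat (by rwa [Idx.neg_neg, ne_comm]) (by rwa [Idx.neg_neg, ne_comm])
      (Idx.neg_injective.ne hil.symm),
    neg_mul_neg, shortCoeff_mul_mul_shortCoeff_mul, D.bar_mul]

theorem TS_val (hij : i ≠ j) (a : A) :
    (D.TS i j a : Matrix (Idx n) (Idx n) A) = 1 + D.Xmat i j a := by
  rw [TS, dif_neg hij]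

theorem TL_val (i : Idx n) (a : A) :
    (D.TL i a : Matrix (Idx n) (Idx n) A) = 1 + single i (Idx.neg i) a :=
  rfl

theorem single_neg_mul_single_neg (i : Idx n) (a b : A) :
    single i (Idx.neg i) a * single i (Idx.neg i) b = (0 : Matrix (Idx n) (Idx n) A) :=
  single_mul_single_of_ne _ _ _ _ (Idx.neg_ne i) _

theorem T_neg_right (i : Idx n) (a : A) : D.T i (Idx.neg i) a = D.TL i a :=
  if_pos rfl

theorem T_of_ne (hij : j ≠ Idx.neg i) (a : A) : D.T i j a = D.TS i j a :=
  if_neg hij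

theorem T_self (i : Idx n) (a : A) : D.T i i a = 1 := by
  rw [T_of_ne D (Idx.neg_ne i).symm, TS, dif_pos rfl]

theorem T_add (i j : Idx n) (a b : A) : D.T i j (a + b) = D.T i j a * D.T i j b := by
  by_cases hij : i = j
  · subst hij
    simp only [T_self, mul_one]
  refine Units.ext ?_
  rw [Units.val_mul]
  by_cases hj : j = Idx.neg i
  · subst hj
    have hsq := single_neg_mul_single_neg i a b
    simp only [T_neg_right, TL_val, add_mul, mul_add, hsq, single_add]
    noncomm_ring
  · have hsq := D.Xmat_mul hij a b
    simp only [T_of_ne D hj, TS_val D hij, add_mul, mul_add, hsq, Xmat_add]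
    noncomm_ring

theorem T_zero (i j : Idx n) : D.T i j 0 = 1 := by
  rw [← mul_eq_left (a := D.T i j 0), ← T_add, add_zero]

theorem T_neg (i j : Idx n) (a : A) : D.T i j (-a) = (D.T i j a)⁻¹ := by
  rw [eq_inv_iff_mul_eq_one, ← T_add, neg_add_cancel, T_zero]

theorem TS_swap (i j : Idx n) (a : A) :
    D.TS (Idx.neg j) (Idx.neg i) (-(D.shortCoeff i j * D.bar a)) = D.TS i j a := by
  by_cases hij : i = j
  · rw [TS, TS, dif_pos hij, dif_pos (congrArg Idx.neg hij.symm)]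
  · refine Units.ext ?_
    rw [TS_val D hij, TS_val D (Idx.neg_injective.ne (Ne.symm hij)), Xmat_swap]

theorem TS_neg_right (i : Idx n) (a : A) :
    D.TS i (Idx.neg i) (D.longCoeff i * a) = D.TL i (D.longCoeff i * (a - D.lam * D.bar a)) := by
  refine Units.ext ?_
  rw [D.TS_val (Idx.neg_ne i).symm, TL_val, Xmat_eq, Idx.neg_neg, shortCoeff_mul_bar_longCoeff_mul,
    mul_sub, sub_eq_add_neg (D.longCoeff i * a), single_add, stdBasisMatrix_neg', ← sub_eq_add_neg]

theorem commutator_TS_TS (hij : i ≠ j) (hij' : i ≠ Idx.neg j) (hjl : j ≠ l) (hjl' : j ≠ Idx.neg l)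
    (hil : i ≠ l) (a b : A) : ⁅D.TS i j a, D.TS j l b⁆ = D.TS i l (a * b) := by
  have hXY := D.Xmat_mul_Xmat hij' hjl' hil a b
  have hYX := D.Xmat_mul_Xmat_swap hij' hjl' hil a b
  have hXYX : D.Xmat i j a * D.Xmat j l b * D.Xmat i j a = 0 := by
    rw [hXY, D.single_mul_Xmat_of_ne hil.symm (Idx.ne_neg_comm.2 hjl'.symm)]
  have hYXY : D.Xmat j l b * D.Xmat i j a * D.Xmat j l b = 0 := by
    rw [mul_assoc, hXY, D.Xmat_mul_single_of_ne hil.symm (Idx.ne_neg_comm.2 hij'.symm)]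
  refine Units.ext ?_
  rw [val_commutator_of_val_eq_one_add (D.TS_val hij a) (D.TS_val hjl b) (D.Xmat_mul hij a a)
    (D.Xmat_mul hjl b b) hXYX, hYXY, hXY, hYX, add_zero, D.TS_val hil, Xmat_eq]

theorem commutator_TL_TS (hil : i ≠ l) (hil' : i ≠ Idx.neg l) {g : A}
    (hg : g = -(D.lam * D.bar g)) (b : A) :
    ⁅D.TL i (D.longCoeff i * g), D.TS (Idx.neg i) l b⁆ =
      D.TS i l (D.longCoeff i * g * b) *
        D.TL (Idx.neg l) (D.longCoeff (Idx.neg l) * -(D.bar b * g * b)) := by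
  set c := D.longCoeff i * g with hc
  set d := D.shortCoeff (Idx.neg i) l * D.bar b with hd
  have hdc : d * c = -(D.shortCoeff i l * D.bar (c * b)) := by
    rw [D.bar_mul, ← D.shortCoeff_mul_mul_shortCoeff_mul i (Idx.neg i) l,
      shortCoeff_mul_bar_longCoeff_mul, ← mul_neg, ← mul_neg, ← hg]
  have hdcb : d * c * b = D.longCoeff (Idx.neg l) * (D.bar b * g * b) := by
    rw [hd, hc, shortCoeff_mul_mul_longCoeff_mul, mul_assoc]
  have hXY : single i (Idx.neg i) c * D.Xmat (Idx.neg i) l b = single i l (c * b) :=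
    D.single_mul_Xmat_same (Idx.neg_injective.ne hil) i c b
  have hYX : D.Xmat (Idx.neg i) l b * single i (Idx.neg i) c =
      -single (Idx.neg l) (Idx.neg i) (d * c) := by
    rw [← D.Xmat_swap (Idx.neg i) l, Idx.neg_neg, D.Xmat_mul_single_same
      (Idx.neg_injective.ne hil.symm), neg_mul, stdBasisMatrix_neg']
  have hYXY : D.Xmat (Idx.neg i) l b * single i (Idx.neg i) c * D.Xmat (Idx.neg i) l b =
      -single (Idx.neg l) l (d * c * b) := by
    rw [hYX, neg_mul, D.single_mul_Xmat_same (Idx.neg_injective.ne hil)]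
  have hXYX : single i (Idx.neg i) c * D.Xmat (Idx.neg i) l b * single i (Idx.neg i) c = 0 := by
    rw [hXY, single_mul_single_of_ne _ _ _ _ hil.symm]
  have hne : Idx.neg i ≠ l := Idx.ne_neg_comm.1 hil'
  refine Units.ext ?_
  rw [val_commutator_of_val_eq_one_add (D.TL_val i c) (D.TS_val hne b)
      (single_neg_mul_single_neg i c c) (D.Xmat_mul hne b b) hXYX, hXY, hYXY, hYX, Units.val_mul,
    D.TS_val hil, TL_val, Idx.neg_neg, mul_neg, ← hdcb, add_mul, mul_add, mul_add,
    D.Xmat_mul_single_of_ne (Idx.neg_ne l).symm (by rwa [Idx.neg_neg]), Xmat_eq, hdc,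
    stdBasisMatrix_neg', stdBasisMatrix_neg', ← hdc]
  noncomm_ring

theorem exists_T_val_eq (hij : i ≠ j) (a : A) : ∃ b c : A,
    (D.T i j a : Matrix (Idx n) (Idx n) A) =
      1 + (single i j b + single (Idx.neg j) (Idx.neg i) c) := by
  by_cases hj : j = Idx.neg i
  · subst hj
    exact ⟨a, 0, by rw [T_neg_right, TL_val, single_zero, add_zero]⟩
  · refine ⟨a, -(D.shortCoeff i j * D.bar a), ?_⟩
    rw [T_of_ne D hj, D.TS_val hij, Xmat_eq, stdBasisMatrix_neg', sub_eq_add_neg]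

theorem single_add_single_neg_mul_eq_zero (hjk : j ≠ k) (hil : i ≠ l) (hjl : j ≠ Idx.neg l)
    (hik : i ≠ Idx.neg k) (a b c d : A) :
    (single i j a + single (Idx.neg j) (Idx.neg i) b) *
      (single k l c + single (Idx.neg l) (Idx.neg k) d) = 0 := by
  rw [add_mul, mul_add, mul_add, single_mul_single_of_ne _ _ _ _ hjk,
    single_mul_single_of_ne _ _ _ _ hjl, single_mul_single_of_ne _ _ _ _ (Idx.ne_neg_comm.1 hik),
    single_mul_single_of_ne _ _ _ _ (Idx.neg_injective.ne hil), add_zero, add_zero]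

theorem commute_T_T (hjk : j ≠ k) (hil : i ≠ l) (hjl : j ≠ Idx.neg l) (hik : i ≠ Idx.neg k)
    (a b : A) : Commute (D.T i j a) (D.T k l b) := by
  by_cases hij : i = j
  · subst hij
    exact D.T_self i a ▸ Commute.one_left _
  by_cases hkl : k = l
  · subst hkl
    exact D.T_self k b ▸ Commute.one_right _
  obtain ⟨a₁, a₂, hx⟩ := D.exists_T_val_eq hij a
  obtain ⟨b₁, b₂, hy⟩ := D.exists_T_val_eq hkl b
  refine Units.ext ?_
  have hxy := single_add_single_neg_mul_eq_zero hjk hil hjl hik a₁ a₂ b₁ b₂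
  have hyx := single_add_single_neg_mul_eq_zero hil.symm hjk.symm (Idx.ne_neg_comm.1 hjl).symm
    (Idx.ne_neg_comm.1 hik).symm b₁ b₂ a₁ a₂
  rw [Units.val_mul, Units.val_mul, hx, hy, mul_one_add, one_add_mul, hxy, mul_one_add, one_add_mul,
    hyx]
  abel

end RootElements

end FormRingData

namespace Idx

variable {n : ℕ}

/-- The weight `ε(i) e_{|i|}` of an index, a vector of `ℤⁿ`. -/
def weight (i : Idx n) : Fin n → ℤ := Pi.single i.1 i.eps

/-- The root of type `C_n` attached to the position `(i, j)`; it vanishes for `i = j`. -/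
def root (i j : Idx n) : Fin n → ℤ := i.weight - j.weight

theorem weight_neg (i : Idx n) : (neg i).weight = -i.weight := by
  rw [weight, weight, eps_neg, Pi.single_neg]
  rfl

theorem root_neg_neg (i j : Idx n) : root (neg j) (neg i) = root i j := by
  rw [root, root, weight_neg, weight_neg, neg_sub_neg]

theorem root_add_root (i j k : Idx n) : root i j + root j k = root i k :=
  sub_add_sub_cancel _ _ _

theorem neg_root (i j : Idx n) : -root i j = root j i :=
  neg_sub _ _

end Idx

namespace FormRingData

section RootSubgroups

variable {A : Type*} [Ring A] (D : FormRingData A) {n : ℕ} {I Γ I' Γ' : AddSubgroup A}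
  {i j : Idx n} {a : A}

theorem pmem_neg_right : D.pmem I Γ i (Idx.neg i) a ↔ ∃ g ∈ Γ, a = D.longCoeff i * g := by
  rw [pmem, if_pos rfl]
  rfl

theorem pmem_of_ne (hj : j ≠ Idx.neg i) : D.pmem I Γ i j a ↔ a ∈ I := by
  rw [pmem, if_neg hj]

/-- The root subgroup of level `(I, Γ)` at the position `(i, j)`; it is trivial for `i = j`. -/
def rootSubgroup (I Γ : AddSubgroup A) (i j : Idx n) : Subgroup (GLn A n) where
  carrier := {x | ∃ a, D.pmem I Γ i j a ∧ D.T i j a = x}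
  one_mem' := by
    refine ⟨0, ?_, D.T_zero i j⟩
    by_cases hj : j = Idx.neg i
    · subst hj
      exact D.pmem_neg_right.2 ⟨0, zero_mem Γ, (mul_zero _).symm⟩
    · exact (D.pmem_of_ne hj).2 (zero_mem I)
  mul_mem' := by
    rintro _ _ ⟨a, ha, rfl⟩ ⟨b, hb, rfl⟩
    refine ⟨a + b, ?_, D.T_add i j a b⟩
    by_cases hj : j = Idx.neg i
    · subst hj
      obtain ⟨g, hg, rfl⟩ := D.pmem_neg_right.1 ha
      obtain ⟨h, hh, rfl⟩ := D.pmem_neg_right.1 hb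
      exact D.pmem_neg_right.2 ⟨g + h, add_mem hg hh, (mul_add _ _ _).symm⟩
    · rw [pmem_of_ne D hj] at ha hb ⊢
      exact add_mem ha hb
  inv_mem' := by
    rintro _ ⟨a, ha, rfl⟩
    refine ⟨-a, ?_, D.T_neg i j a⟩
    by_cases hj : j = Idx.neg i
    · subst hj
      obtain ⟨g, hg, rfl⟩ := D.pmem_neg_right.1 ha
      exact D.pmem_neg_right.2 ⟨-g, neg_mem hg, (mul_neg _ _).symm⟩
    · rw [pmem_of_ne D hj] at ha ⊢
      exact neg_mem ha

variable {x : GLn A n}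

theorem mem_rootSubgroup_neg_right :
    x ∈ D.rootSubgroup I Γ i (Idx.neg i) ↔ ∃ g ∈ Γ, D.TL i (D.longCoeff i * g) = x := by
  constructor
  · rintro ⟨a, ha, rfl⟩
    obtain ⟨g, hg, rfl⟩ := D.pmem_neg_right.1 ha
    exact ⟨g, hg, (D.T_neg_right i _).symm⟩
  · rintro ⟨g, hg, rfl⟩
    exact ⟨_, D.pmem_neg_right.2 ⟨g, hg, rfl⟩, D.T_neg_right i _⟩

theorem mem_rootSubgroup_of_ne (hj : j ≠ Idx.neg i) :
    x ∈ D.rootSubgroup I Γ i j ↔ ∃ a ∈ I, D.TS i j a = x := by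
  simp only [← T_of_ne D hj, ← pmem_of_ne D (Γ := Γ) hj]
  rfl

theorem rootSubgroup_self : D.rootSubgroup I Γ i i = ⊥ := by
  rw [eq_bot_iff]
  rintro _ ⟨a, -, rfl⟩
  exact D.T_self i a

theorem rootSubgroup_mono (hI : I ≤ I') (hΓ : Γ ≤ Γ') :
    D.rootSubgroup I Γ i j ≤ D.rootSubgroup I' Γ' i j := by
  intro x hx
  by_cases hj : j = Idx.neg i
  · subst hj
    rw [mem_rootSubgroup_neg_right] at hx ⊢
    exact hx.imp fun g => And.imp_left fun hg => hΓ hg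
  · rw [D.mem_rootSubgroup_of_ne hj] at hx ⊢
    exact hx.imp fun a => And.imp_left fun ha => hI ha

theorem rootSubgroup_neg_neg (FI : FormIdeal D) (i j : Idx n) :
    D.rootSubgroup FI.I FI.Gamma (Idx.neg j) (Idx.neg i) = D.rootSubgroup FI.I FI.Gamma i j := by
  suffices h : ∀ i j : Idx n, D.rootSubgroup FI.I FI.Gamma i j ≤
      D.rootSubgroup FI.I FI.Gamma (Idx.neg j) (Idx.neg i) by
    refine le_antisymm ?_ (h i j)
    simpa only [Idx.neg_neg] using h (Idx.neg j) (Idx.neg i)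
  intro i j x hx
  by_cases hj : j = Idx.neg i
  · subst hj
    rwa [Idx.neg_neg]
  · obtain ⟨a, ha, rfl⟩ := (D.mem_rootSubgroup_of_ne hj).1 hx
    refine (D.mem_rootSubgroup_of_ne ?_).2 ⟨-(D.shortCoeff i j * D.bar a),
      neg_mem (FI.mul_mem_left _ _ (FI.bar_mem a ha)), D.TS_swap i j a⟩
    rwa [Idx.neg_neg, ne_comm]

/-- The subgroup generated by the root subgroups of level `(I, Γ)` whose root lies in `P`. -/
def rootSpan (I Γ : AddSubgroup A) (P : Set (Fin n → ℤ)) : Subgroup (GLn A n) :=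
  ⨆ (i : Idx n) (j : Idx n) (_ : Idx.root i j ∈ P), D.rootSubgroup I Γ i j

variable {P Q : Set (Fin n → ℤ)} {H : Subgroup (GLn A n)}

theorem rootSubgroup_le_rootSpan (hP : Idx.root i j ∈ P) :
    D.rootSubgroup I Γ i j ≤ D.rootSpan I Γ P :=
  le_iSup_of_le i (le_iSup_of_le j (le_iSup_of_le hP le_rfl))

theorem rootSpan_le_iff :
    D.rootSpan I Γ P ≤ H ↔ ∀ i j, Idx.root i j ∈ P → D.rootSubgroup I Γ i j ≤ H := by
  simp only [rootSpan, iSup_le_iff]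

theorem rootSpan_mono (hI : I ≤ I') (hΓ : Γ ≤ Γ') (hPQ : P ⊆ Q) :
    D.rootSpan I Γ P ≤ D.rootSpan I' Γ' Q :=
  D.rootSpan_le_iff.2 fun _ _ h =>
    (D.rootSubgroup_mono hI hΓ).trans (D.rootSubgroup_le_rootSpan (hPQ h))

theorem FU_eq_rootSpan : D.FU n I Γ = D.rootSpan I Γ Set.univ := by
  refine le_antisymm ((Subgroup.closure_le _).2 ?_) (D.rootSpan_le_iff.2 fun i j _ x hx => ?_)
  · rintro _ (⟨i, j, -, hij, c, hc, rfl⟩ | ⟨i, g, hg, rfl⟩)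
    · exact D.rootSubgroup_le_rootSpan (Set.mem_univ _)
        ((D.mem_rootSubgroup_of_ne (Idx.ne_neg_comm.1 hij).symm).2 ⟨c, hc, rfl⟩)
    · exact D.rootSubgroup_le_rootSpan (Set.mem_univ _)
        (D.mem_rootSubgroup_neg_right.2 ⟨g, hg, rfl⟩)
  · by_cases hij : i = j
    · subst hij
      rw [rootSubgroup_self, Subgroup.mem_bot] at hx
      exact hx ▸ one_mem _
    by_cases hj : j = Idx.neg i
    · subst hj
      obtain ⟨g, hg, rfl⟩ := D.mem_rootSubgroup_neg_right.1 hx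
      exact Subgroup.subset_closure (Or.inr ⟨i, g, hg, rfl⟩)
    · obtain ⟨a, ha, rfl⟩ := (D.mem_rootSubgroup_of_ne hj).1 hx
      exact Subgroup.subset_closure
        (Or.inl ⟨i, j, hij, Idx.ne_neg_comm.2 (Ne.symm hj), a, ha, rfl⟩)

theorem rootSpan_le_FU : D.rootSpan I Γ P ≤ D.FU n I Γ :=
  (D.rootSpan_mono le_rfl le_rfl (Set.subset_univ P)).trans_eq D.FU_eq_rootSpan.symm

theorem FU_le_EU : D.FU n I Γ ≤ D.EU n I Γ :=
  Subgroup.closure_mono fun t ht => ⟨1, one_mem _, t, ht, by rw [one_mul, inv_one, mul_one]⟩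

theorem rootSpan_le_EUmax (hΓ : Γ ≤ D.Lambda) : D.rootSpan I Γ P ≤ D.EUmax n := by
  rw [EUmax, FU_eq_rootSpan]
  exact D.rootSpan_mono le_top hΓ (Set.subset_univ P)

theorem rootSubgroup_le_EUmax (hΓ : Γ ≤ D.Lambda) : D.rootSubgroup I Γ i j ≤ D.EUmax n :=
  (D.rootSubgroup_le_rootSpan (Set.mem_univ _)).trans (D.rootSpan_le_EUmax hΓ)

theorem EUmax_le_normalizer_EU :
    D.EUmax n ≤ Subgroup.normalizer (D.EU n I Γ : Set (GLn A n)) := by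
  rw [EU, Subgroup.le_normalizer_closure_iff]
  rintro h hh _ ⟨g, hg, t, ht, rfl⟩
  exact Subgroup.subset_closure ⟨h * g, mul_mem hh hg, t, ht, by group⟩

theorem EUmax_le_normalizer_EUsym {J Δ : AddSubgroup A} :
    D.EUmax n ≤ Subgroup.normalizer (D.EUsym n I Γ J Δ : Set (GLn A n)) :=
  D.EUmax_le_normalizer_EU

end RootSubgroups

end FormRingData

/-- The combinations of `α` and `β` with positive integral coefficients. -/
def posCone {n : ℕ} (α β : Fin n → ℤ) : Set (Fin n → ℤ) :=
  {γ | ∃ s t : ℤ, 0 < s ∧ 0 < t ∧ s • α + t • β = γ}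

theorem posCone_comm {n : ℕ} (α β : Fin n → ℤ) : posCone α β = posCone β α := by
  ext γ
  constructor <;> exact fun ⟨s, t, hs, ht, h⟩ => ⟨t, s, ht, hs, by rw [add_comm, h]⟩

theorem root_mem_posCone {n : ℕ} (i j l : Idx n) :
    Idx.root i l ∈ posCone (Idx.root i j) (Idx.root j l) :=
  ⟨1, 1, one_pos, one_pos, by rw [one_smul, one_smul, Idx.root_add_root]⟩

theorem root_neg_left_mem_posCone {n : ℕ} (i l : Idx n) :
    Idx.root (Idx.neg l) l ∈ posCone (Idx.root i (Idx.neg i)) (Idx.root (Idx.neg i) l) := by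
  refine ⟨1, 2, one_pos, two_pos, ?_⟩
  simp only [Idx.root, Idx.weight_neg]
  module

namespace FormRingData

section ChevalleyFormula

variable {A : Type*} [Ring A] (D : FormRingData A)

section SymmetrisedProduct

variable {I J Γ Δ : AddSubgroup A} {a b g : A}

theorem symI_comm (I J : AddSubgroup A) : symI I J = symI J I :=
  sup_comm _ _

theorem symG_comm (I Γ J Δ : AddSubgroup A) : D.symG I Γ J Δ = D.symG J Δ I Γ := by
  rw [symG, symG, symI_comm, sup_right_comm]

theorem EUsym_comm (n : ℕ) (I Γ J Δ : AddSubgroup A) :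
    D.EUsym n I Γ J Δ = D.EUsym n J Δ I Γ := by
  rw [EUsym, EUsym, symI_comm, symG_comm]

theorem mul_mem_symI (ha : a ∈ I) (hb : b ∈ J) : a * b ∈ symI I J :=
  AddSubgroup.mem_sup_left (AddSubgroup.subset_closure ⟨a, ha, b, hb, rfl⟩)

theorem sub_lam_mul_bar_mem_symG (ha : a ∈ symI I J) : a - D.lam * D.bar a ∈ D.symG I Γ J Δ :=
  AddSubgroup.mem_sup_left (AddSubgroup.mem_sup_left
    (AddSubgroup.subset_closure (Or.inl ⟨a, ha, rfl⟩)))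

theorem mul_mul_bar_mem_symG (hb : b ∈ J) (hg : g ∈ Γ) : b * g * D.bar b ∈ D.symG I Γ J Δ :=
  AddSubgroup.mem_sup_left (AddSubgroup.mem_sup_right
    (AddSubgroup.subset_closure ⟨b, hb, g, hg, rfl⟩))

end SymmetrisedProduct

variable {D} {n : ℕ} (FI FJ : FormIdeal D) {i j k l : Idx n}

/-- The subgroup generated by the root subgroups of the level of the symmetrised product whose
root lies in `P`. -/
def symRootSpan (P : Set (Fin n → ℤ)) : Subgroup (GLn A n) :=
  D.rootSpan (symI FI.I FJ.I) (D.symG FI.I FI.Gamma FJ.I FJ.Gamma) P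

theorem symRootSpan_comm (P : Set (Fin n → ℤ)) : symRootSpan FI FJ P = symRootSpan FJ FI P := by
  rw [symRootSpan, symRootSpan, symI_comm, symG_comm]

theorem symRootSpan_le_EUsym (P : Set (Fin n → ℤ)) :
    symRootSpan FI FJ P ≤ D.EUsym n FI.I FI.Gamma FJ.I FJ.Gamma :=
  D.rootSpan_le_FU.trans D.FU_le_EU

theorem commutator_rootSubgroup_long_short (hil : i ≠ l) (hil' : l ≠ Idx.neg i) :
    ⁅D.rootSubgroup FI.I FI.Gamma i (Idx.neg i), D.rootSubgroup FJ.I FJ.Gamma (Idx.neg i) l⁆ ≤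
      symRootSpan FI FJ (posCone (Idx.root i (Idx.neg i)) (Idx.root (Idx.neg i) l)) := by
  rw [Subgroup.commutator_le]
  intro x hx y hy
  obtain ⟨g, hg, rfl⟩ := D.mem_rootSubgroup_neg_right.1 hx
  obtain ⟨b, hb, rfl⟩ := (D.mem_rootSubgroup_of_ne (by rwa [Idx.neg_neg, ne_comm])).1 hy
  rw [D.commutator_TL_TS hil (Idx.ne_neg_comm.2 hil'.symm)
    (D.lambdaMax_mem g (FI.gamma_le_Lambda hg))]
  refine mul_mem
    (D.rootSubgroup_le_rootSpan (root_mem_posCone _ _ _)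
      ((D.mem_rootSubgroup_of_ne hil').2 ⟨_, ?_, rfl⟩))
    (D.rootSubgroup_le_rootSpan (root_neg_left_mem_posCone i l) ?_)
  · exact mul_mem_symI (FI.mul_mem_left _ g (FI.gamma_le_I hg)) hb
  · have hbg := D.mul_mul_bar_mem_symG (I := FI.I) (Δ := FJ.Gamma) (FJ.bar_mem b hb) hg
    rw [D.bar_bar] at hbg
    have h := (D.mem_rootSubgroup_neg_right (I := symI FI.I FJ.I) (i := Idx.neg l)).2
      ⟨_, neg_mem hbg, rfl⟩
    rwa [Idx.neg_neg] at h

theorem commutator_rootSubgroup_short_short (hij : i ≠ j) (hji : j ≠ Idx.neg i) (hjl : j ≠ l)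
    (hlj : l ≠ Idx.neg j) (hil : i ≠ l) :
    ⁅D.rootSubgroup FI.I FI.Gamma i j, D.rootSubgroup FJ.I FJ.Gamma j l⁆ ≤
      symRootSpan FI FJ (posCone (Idx.root i j) (Idx.root j l)) := by
  rw [Subgroup.commutator_le]
  intro x hx y hy
  obtain ⟨a, ha, rfl⟩ := (D.mem_rootSubgroup_of_ne hji).1 hx
  obtain ⟨b, hb, rfl⟩ := (D.mem_rootSubgroup_of_ne hlj).1 hy
  rw [D.commutator_TS_TS hij (Idx.ne_neg_comm.2 hji.symm) hjl (Idx.ne_neg_comm.2 hlj.symm) hil]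
  refine D.rootSubgroup_le_rootSpan (root_mem_posCone i j l) ?_
  by_cases hli : l = Idx.neg i
  · subst hli
    rw [← D.longCoeff_mul_lpow_mul i (a * b), TS_neg_right, D.mem_rootSubgroup_neg_right,
      ← mul_assoc]
    exact ⟨_, D.sub_lam_mul_bar_mem_symG (mul_mem_symI (FI.mul_mem_left _ a ha) hb), rfl⟩
  · exact (D.mem_rootSubgroup_of_ne hli).2 ⟨_, mul_mem_symI ha hb, rfl⟩

theorem commutator_rootSubgroup_adjacent (h : Idx.root i j ≠ -Idx.root j l) :
    ⁅D.rootSubgroup FI.I FI.Gamma i j, D.rootSubgroup FJ.I FJ.Gamma j l⁆ ≤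
      symRootSpan FI FJ (posCone (Idx.root i j) (Idx.root j l)) := by
  have hil : i ≠ l := by
    rintro rfl
    exact h (Idx.neg_root j i).symm
  by_cases hij : i = j
  · subst hij
    rw [D.rootSubgroup_self, Subgroup.commutator_bot_left]
    exact bot_le
  by_cases hjl : j = l
  · subst hjl
    rw [D.rootSubgroup_self, Subgroup.commutator_bot_right]
    exact bot_le
  by_cases hji : j = Idx.neg i
  · subst hji
    exact commutator_rootSubgroup_long_short FI FJ hil (Ne.symm hjl)
  by_cases hlj : l = Idx.neg j
  · subst hlj
    rw [Subgroup.commutator_comm, posCone_comm, symRootSpan_comm, ← D.rootSubgroup_neg_neg FI i j,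
      ← Idx.root_neg_neg i j]
    exact commutator_rootSubgroup_long_short FJ FI hji (Idx.neg_injective.ne hij)
  exact commutator_rootSubgroup_short_short FI FJ hij hji hjl hlj hil

theorem commutator_rootSubgroup_le (h : Idx.root i j ≠ -Idx.root k l) :
    ⁅D.rootSubgroup FI.I FI.Gamma i j, D.rootSubgroup FJ.I FJ.Gamma k l⁆ ≤
      symRootSpan FI FJ (posCone (Idx.root i j) (Idx.root k l)) := by
  have h' : Idx.root k l ≠ -Idx.root i j := fun e => h (by rw [e, neg_neg])
  by_cases hjk : j = k
  · subst hjk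
    exact commutator_rootSubgroup_adjacent FI FJ h
  by_cases hil : i = l
  · subst hil
    rw [Subgroup.commutator_comm, posCone_comm, symRootSpan_comm]
    exact commutator_rootSubgroup_adjacent FJ FI h'
  by_cases hjl : j = Idx.neg l
  · subst hjl
    rw [← Idx.root_neg_neg k l] at h ⊢
    rw [← D.rootSubgroup_neg_neg FJ k l]
    exact commutator_rootSubgroup_adjacent FI FJ h
  by_cases hik : i = Idx.neg k
  · subst hik
    rw [← Idx.root_neg_neg k l] at h' ⊢
    rw [Subgroup.commutator_comm, posCone_comm, symRootSpan_comm, ← D.rootSubgroup_neg_neg FJ k l]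
    exact commutator_rootSubgroup_adjacent FJ FI h'
  rw [Subgroup.commutator_le]
  rintro _ ⟨a, -, rfl⟩ _ ⟨b, -, rfl⟩
  rw [commutatorElement_eq_one_iff_commute.2 (D.commute_T_T hjk hil hjl hik a b)]
  exact one_mem _

end ChevalleyFormula

end FormRingData

theorem ne_neg_of_apply_eq_zero {ι M : Type*} [AddGroup M] {α β : ι → M} {p : ι} (hα : α p = 0)
    (hβ : β p ≠ 0) : α ≠ -β := by
  rintro rfl
  exact hβ (neg_eq_zero.1 hα)

namespace Idx

variable {n : ℕ} {i j : Idx n} {p : Fin n}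

theorem weight_apply_of_ne (h : p ≠ i.1) : i.weight p = 0 :=
  Pi.single_eq_of_ne h _

theorem root_apply_eq_zero (hi : p ≠ i.1) (hj : p ≠ j.1) : root i j p = 0 := by
  rw [root, Pi.sub_apply, weight_apply_of_ne hi, weight_apply_of_ne hj, sub_zero]

theorem root_apply_fst_ne_zero (hij : i ≠ j) : root i j i.1 ≠ 0 := by
  obtain ⟨i, b⟩ := i
  obtain ⟨j, c⟩ := j
  by_cases h : i = j
  · subst h
    cases b <;> cases c <;> simp_all [root, weight, eps]
  · rw [root, Pi.sub_apply, weight_apply_of_ne (i := (j, c)) h, weight, Pi.single_eq_same]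
    cases b <;> simp [eps]

theorem root_apply_snd_ne_zero (hij : i ≠ j) : root i j j.1 ≠ 0 := by
  rw [← neg_root, Pi.neg_apply, neg_ne_zero]
  exact root_apply_fst_ne_zero hij.symm

end Idx

/-- The form ideal `(A, Λ)`. -/
def FormIdeal.top {A : Type*} [Ring A] (D : FormRingData A) : FormIdeal D where
  I := ⊤
  Gamma := D.Lambda
  mul_mem_left _ _ _ := AddSubgroup.mem_top _
  mul_mem_right _ _ _ := AddSubgroup.mem_top _
  bar_mem _ _ := AddSubgroup.mem_top _
  gammaMin_le := by
    refine (AddSubgroup.closure_le _).2 ?_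
    rintro _ (⟨a, -, rfl⟩ | ⟨a, -, c, hc, rfl⟩)
    · exact D.lambdaMin_mem a
    · exact D.lambda_conj a c hc
  gamma_le_I := le_top
  gamma_le_Lambda := le_rfl
  gamma_conj := D.lambda_conj

namespace FormRingData

section Centrality

variable {A : Type*} [Ring A] {D : FormRingData A} {n : ℕ} {i j k l : Idx n} {p : Fin n}

theorem symI_top_le (FI : FormIdeal D) : symI FI.I (FormIdeal.top D).I ≤ FI.I := by
  refine sup_le ((AddSubgroup.closure_le _).2 ?_) ((AddSubgroup.closure_le _).2 ?_)
  · rintro _ ⟨a, ha, b, -, rfl⟩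
    exact FI.mul_mem_right b a ha
  · rintro _ ⟨b, -, a, ha, rfl⟩
    exact FI.mul_mem_left b a ha

theorem symG_top_le (FI : FormIdeal D) :
    D.symG FI.I FI.Gamma (FormIdeal.top D).I (FormIdeal.top D).Gamma ≤ FI.Gamma := by
  refine sup_le (sup_le ?_ ((AddSubgroup.closure_le _).2 ?_)) ((AddSubgroup.closure_le _).2 ?_)
  · refine le_trans (AddSubgroup.closure_mono (Set.union_subset_union ?_ ?_)) FI.gammaMin_le
    · exact fun x ⟨a, ha, hx⟩ => ⟨a, symI_top_le FI ha, hx⟩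
    · exact fun x ⟨a, ha, hx⟩ => ⟨a, symI_top_le FI ha, hx⟩
  · rintro _ ⟨b, -, g, hg, rfl⟩
    exact FI.gamma_conj b g hg
  · rintro _ ⟨a, ha, g, hg, rfl⟩
    exact FI.gammaMin_le (AddSubgroup.subset_closure (Or.inr ⟨a, ha, g, hg, rfl⟩))

theorem symRootSpan_top_le (FI : FormIdeal D) (P : Set (Fin n → ℤ)) :
    symRootSpan FI (FormIdeal.top D) P ≤ D.rootSpan FI.I FI.Gamma P :=
  D.rootSpan_mono (symI_top_le FI) (symG_top_le FI) subset_rfl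

theorem commutator_rootSpan_le {I Γ : AddSubgroup A} {P : Set (Fin n → ℤ)}
    {N K : Subgroup (GLn A n)} (hN : D.rootSpan I Γ P ≤ Subgroup.normalizer (N : Set (GLn A n)))
    (h : ∀ i j, Idx.root i j ∈ P → ⁅D.rootSubgroup I Γ i j, K⁆ ≤ N) :
    ⁅D.rootSpan I Γ P, K⁆ ≤ N := by
  refine (le_centralizerMod_iff.1 (D.rootSpan_le_iff.2 fun i j hij => ?_)).2
  exact le_centralizerMod_iff.2 ⟨(D.rootSubgroup_le_rootSpan hij).trans hN, h i j hij⟩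

theorem rootSubgroup_le_rootSpan_of_ne_neg (hij : i ≠ j) (hj : j ≠ Idx.neg i) (hpi : p ≠ i.1)
    (hpj : p ≠ j.1) :
    D.rootSubgroup ⊤ D.Lambda i j ≤ D.rootSpan ⊤ D.Lambda {v | v p ≠ 0} := by
  intro x hx
  obtain ⟨a, -, rfl⟩ := (D.mem_rootSubgroup_of_ne hj).1 hx
  let h : Idx n := (p, true)
  have ne_h {k : Idx n} (hk : p ≠ k.1) : k ≠ h ∧ k ≠ Idx.neg h :=
    ⟨fun e => hk (congrArg Prod.fst e).symm, fun e => hk (congrArg Prod.fst e).symm⟩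
  obtain ⟨hi, hi'⟩ := ne_h hpi
  obtain ⟨hl, hl'⟩ := ne_h hpj
  have hh : h ≠ Idx.neg i := (Idx.ne_neg_comm.1 hi').symm
  rw [← mul_one a, ← D.commutator_TS_TS hi hi' hl.symm (Idx.ne_neg_comm.1 hl').symm hij]
  exact Subgroup.commutator_le_self _ (Subgroup.commutator_mem_commutator
    (D.rootSubgroup_le_rootSpan (Idx.root_apply_snd_ne_zero hi)
      ((D.mem_rootSubgroup_of_ne hh).2 ⟨a, AddSubgroup.mem_top a, rfl⟩))
    (D.rootSubgroup_le_rootSpan (Idx.root_apply_fst_ne_zero hl.symm)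
      ((D.mem_rootSubgroup_of_ne hl').2 ⟨1, AddSubgroup.mem_top 1, rfl⟩)))

theorem rootSubgroup_neg_right_le_rootSpan (hpi : p ≠ i.1) :
    D.rootSubgroup ⊤ D.Lambda i (Idx.neg i) ≤ D.rootSpan ⊤ D.Lambda {v | v p ≠ 0} := by
  intro x hx
  obtain ⟨g, hg, rfl⟩ := D.mem_rootSubgroup_neg_right.1 hx
  let h : Idx n := (p, true)
  have hi : h ≠ i := fun e => hpi (congrArg Prod.fst e)
  have hi' : h ≠ Idx.neg i := fun e => hpi (congrArg Prod.fst e)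
  have hg' := neg_mem hg
  have key := D.commutator_TL_TS hi' (by rwa [Idx.neg_neg]) (D.lambdaMax_mem _ hg') 1
  rw [D.bar_one, one_mul, mul_one, mul_one, _root_.neg_neg, Idx.neg_neg, ← inv_mul_eq_iff_eq_mul]
    at key
  rw [← key]
  refine mul_mem (inv_mem (D.rootSubgroup_le_rootSpan (Idx.root_apply_fst_ne_zero hi')
    ((D.mem_rootSubgroup_of_ne (Idx.neg_injective.ne hi.symm)).2
      ⟨_, AddSubgroup.mem_top _, rfl⟩))) ?_
  exact Subgroup.commutator_le_self _ (Subgroup.commutator_mem_commutator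
    (D.rootSubgroup_le_rootSpan (Idx.root_apply_fst_ne_zero (Idx.neg_ne h).symm)
      (D.mem_rootSubgroup_neg_right.2 ⟨_, hg', rfl⟩))
    (D.rootSubgroup_le_rootSpan (Idx.root_apply_fst_ne_zero (Idx.neg_injective.ne hi))
      ((D.mem_rootSubgroup_of_ne (by rw [Idx.neg_neg]; exact hi'.symm)).2
        ⟨1, AddSubgroup.mem_top 1, rfl⟩)))

theorem EUmax_le_rootSpan (p : Fin n) :
    D.EUmax n ≤ D.rootSpan ⊤ D.Lambda {v | v p ≠ 0} := by
  rw [EUmax, FU_eq_rootSpan, rootSpan_le_iff]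
  intro i j _
  by_cases hp : Idx.root i j p = 0
  swap
  · exact D.rootSubgroup_le_rootSpan hp
  by_cases hij : i = j
  · subst hij
    exact D.rootSubgroup_self.trans_le bot_le
  have hpi : p ≠ i.1 := by
    rintro rfl
    exact Idx.root_apply_fst_ne_zero hij hp
  have hpj : p ≠ j.1 := by
    rintro rfl
    exact Idx.root_apply_snd_ne_zero hij hp
  by_cases hj : j = Idx.neg i
  · subst hj
    exact rootSubgroup_neg_right_le_rootSpan hpi
  · exact rootSubgroup_le_rootSpan_of_ne_neg hij hj hpi hpj

variable (FI FJ : FormIdeal D)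

theorem commutator_rootSubgroup_top_le (hij : Idx.root i j p = 0) (hkl : Idx.root k l p ≠ 0) :
    ⁅D.rootSubgroup FI.I FI.Gamma i j, D.rootSubgroup ⊤ D.Lambda k l⁆ ≤
      D.rootSpan FI.I FI.Gamma {v | v p ≠ 0} := by
  refine (commutator_rootSubgroup_le FI (FormIdeal.top D) (ne_neg_of_apply_eq_zero hij hkl)).trans
    ((symRootSpan_top_le FI _).trans (D.rootSpan_mono le_rfl le_rfl ?_))
  rintro _ ⟨s, t, -, ht, rfl⟩
  simpa [hij, ht.ne'] using hkl

theorem commutator_rootSpan_rootSubgroup_le (hkl : Idx.root k l p = 0) :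
    ⁅D.rootSpan FI.I FI.Gamma {v | v p ≠ 0}, D.rootSubgroup FJ.I FJ.Gamma k l⁆ ≤
      D.EUsym n FI.I FI.Gamma FJ.I FJ.Gamma := by
  refine commutator_rootSpan_le
    ((D.rootSpan_le_EUmax FI.gamma_le_Lambda).trans D.EUmax_le_normalizer_EUsym)
    fun i j hij => ?_
  rw [Subgroup.commutator_comm, EUsym_comm]
  exact (commutator_rootSubgroup_le FJ FI (ne_neg_of_apply_eq_zero hkl hij)).trans
    (symRootSpan_le_EUsym FJ FI _)

theorem commutator_commutator_EUmax_le_of_apply_eq_zero (hij : Idx.root i j p = 0)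
    (hkl : Idx.root k l p = 0) :
    ⁅⁅D.rootSubgroup FI.I FI.Gamma i j, D.rootSubgroup FJ.I FJ.Gamma k l⁆, D.EUmax n⁆ ≤
      D.EUsym n FI.I FI.Gamma FJ.I FJ.Gamma := by
  have hN := D.EUmax_le_normalizer_EUsym (n := n) (I := FI.I) (Γ := FI.Gamma) (J := FJ.I)
    (Δ := FJ.Gamma)
  refine (Subgroup.commutator_mono le_rfl (EUmax_le_rootSpan p)).trans ?_
  rw [Subgroup.commutator_comm]
  refine commutator_rootSpan_le ((D.rootSpan_le_EUmax le_rfl).trans hN) fun r s hrs => ?_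
  rw [Subgroup.commutator_comm]
  refine commutator_commutator_le_of_rotate ((D.rootSubgroup_le_EUmax FI.gamma_le_Lambda).trans hN)
    ((D.rootSubgroup_le_EUmax FJ.gamma_le_Lambda).trans hN)
    ((D.rootSubgroup_le_EUmax le_rfl).trans hN) ?_ ?_
  · rw [EUsym_comm]
    exact (Subgroup.commutator_mono (commutator_rootSubgroup_top_le FJ hkl hrs) le_rfl).trans
      (commutator_rootSpan_rootSubgroup_le FJ FI hij)
  · rw [Subgroup.commutator_comm (D.rootSubgroup _ _ r s)]
    exact (Subgroup.commutator_mono (commutator_rootSubgroup_top_le FI hij hrs) le_rfl).trans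
      (commutator_rootSpan_rootSubgroup_le FI FJ hkl)

theorem commutator_commutator_rootSubgroup_EUmax_le (hn : 3 ≤ n) (i j k l : Idx n) :
    ⁅⁅D.rootSubgroup FI.I FI.Gamma i j, D.rootSubgroup FJ.I FJ.Gamma k l⁆, D.EUmax n⁆ ≤
      D.EUsym n FI.I FI.Gamma FJ.I FJ.Gamma := by
  by_cases h : Idx.root i j = -Idx.root k l
  · obtain ⟨p, hpi, hpj⟩ := Fin.exists_ne_and_ne_of_two_lt i.1 j.1 hn
    have hij := Idx.root_apply_eq_zero hpi hpj
    refine commutator_commutator_EUmax_le_of_apply_eq_zero FI FJ hij ?_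
    rwa [h, Pi.neg_apply, neg_eq_zero] at hij
  · exact (Subgroup.commutator_mono ((commutator_rootSubgroup_le FI FJ h).trans
      (symRootSpan_le_EUsym FI FJ _)) le_rfl).trans
      (Subgroup.le_normalizer_iff_commutator_le_left.1 D.EUmax_le_normalizer_EUsym)

theorem commutator_rootSubgroup_le_centralizerMod (hn : 3 ≤ n) (i j k l : Idx n) :
    ⁅D.rootSubgroup FI.I FI.Gamma i j, D.rootSubgroup FJ.I FJ.Gamma k l⁆ ≤
      centralizerMod (D.EUsym n FI.I FI.Gamma FJ.I FJ.Gamma) (D.EUmax n) := by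
  refine le_centralizerMod_iff.2 ⟨le_trans ?_ D.EUmax_le_normalizer_EUsym,
    commutator_commutator_rootSubgroup_EUmax_le FI FJ hn i j k l⟩
  exact (Subgroup.commutator_mono (D.rootSubgroup_le_EUmax FI.gamma_le_Lambda)
    (D.rootSubgroup_le_EUmax FJ.gamma_le_Lambda)).trans (Subgroup.commutator_le_self _)

end Centrality

end FormRingData

/-- Theorem 5: `[FU(2n,I,Γ), FU(2n,J,Δ)]` is central in `EU(2n,A,Λ)` modulo
`EU(2n,(I,Γ)∘(J,Δ))`. -/
theorem statement2 {A : Type*} [Ring A] (D : FormRingData A) (n : ℕ) (hn : 3 ≤ n)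
    (FI FJ : FormIdeal D) :
    ⁅⁅D.FU n FI.I FI.Gamma, D.FU n FJ.I FJ.Gamma⁆, D.EUmax n⁆ ≤
      D.EUsym n FI.I FI.Gamma FJ.I FJ.Gamma := by
  have hE := le_normalizer_centralizerMod (D.EUmax_le_normalizer_EUsym (n := n) (I := FI.I)
    (Γ := FI.Gamma) (J := FJ.I) (Δ := FJ.Gamma))
  rw [D.FU_eq_rootSpan, D.FU_eq_rootSpan]
  refine (le_centralizerMod_iff.1 ?_).2
  refine FormRingData.commutator_rootSpan_le
    ((D.rootSpan_le_EUmax FI.gamma_le_Lambda).trans hE) fun i j _ => ?_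
  rw [Subgroup.commutator_comm]
  refine FormRingData.commutator_rootSpan_le
    ((D.rootSpan_le_EUmax FJ.gamma_le_Lambda).trans hE) fun k l _ => ?_
  rw [Subgroup.commutator_comm]
  exact FormRingData.commutator_rootSubgroup_le_centralizerMod FI FJ hn i j k l
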